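/- Let K have characteristic zero, let A be a set of d ≥ 2 distinct hyperplanes in ℙⁿ, and let H = V(x) be a hyperplane not in A (x a linear form) that contains at most one subspace of S(A). Then, for a general linear form ℓ, the general residual of A ∪ {H} is a basic double link of r_A: r_{A∪{H}} = x·r_A + (p), where x, p is a regular sequence, deg p = |A ∩ H| (the number of distinct codimension-two subspaces H′∩H with H′ ∈ A), and p can be taken as follows: p = f_A if H contains no subspace of S(A); and p = ℓ_Q·h if S(A) ∩ H = {Q}, where h is the product of the linear divisors of f_A defining hyperplanes not containing Q and ℓ_Q is a linear form defining the hyperplane spanned by Q and the dual point ℓ∨. -/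

import Mathlib

open MvPolynomial

/-- The derivative `∂f/∂ℓ = Σᵢ aᵢ·∂f/∂xᵢ` of `f` in the direction of the linear form
`ℓ = Σᵢ aᵢxᵢ` with coefficient vector `a`. -/
noncomputable def lderiv {K : Type*} [CommRing K] {m : ℕ} (a : Fin m → K)
    (f : MvPolynomial (Fin m) K) : MvPolynomial (Fin m) K :=
  ∑ i, a i • pderiv i f

/-- The Jacobian ideal of `f`, generated by all partial derivatives of `f`. -/
noncomputable def jacobianIdeal {K : Type*} [CommRing K] {m : ℕ}
    (f : MvPolynomial (Fin m) K) : Ideal (MvPolynomial (Fin m) K) :=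
  Ideal.span (Set.range fun i => pderiv i f)

/-- The general residual of the arrangement with defining polynomial `f` with respect to
the linear form with coefficient vector `a`: `r = (f, ∂f/∂ℓ) : Jac(f)`. -/
noncomputable def genResidual {K : Type*} [CommRing K] {m : ℕ} (a : Fin m → K)
    (f : MvPolynomial (Fin m) K) : Ideal (MvPolynomial (Fin m) K) :=
  (Ideal.span {f, lderiv a f}).colon (jacobianIdeal f)

/-- The top support `S(A)` of the singular locus of the arrangement defined by the linear
forms `L i`: the (ideals `I_P` of the) codimension-two subspaces cut out by two distinct
hyperplanes of the arrangement. -/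
def singSupp {K : Type*} [CommRing K] {m d : ℕ} (L : Fin d → MvPolynomial (Fin m) K) :
    Set (Ideal (MvPolynomial (Fin m) K)) :=
  {I | ∃ i j : Fin d, i ≠ j ∧ I = Ideal.span {L i, L j}}

section helpers

variable {K : Type*} [Field K] {m : ℕ}

/-- The linear form with given coefficients. -/
noncomputable def linF (c : Fin m → K) : MvPolynomial (Fin m) K := ∑ k, C (c k) * X k

lemma exists_linF {p : MvPolynomial (Fin m) K} (hp : p.IsHomogeneous 1) :
    ∃ c : Fin m → K, p = linF c := by
  have h := hp.sum_X_mul_pderiv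
  refine ⟨fun k => coeff 0 (pderiv k p), ?_⟩
  have h2 : ∀ k, pderiv k p = C (coeff 0 (pderiv k p)) := by
    intro k
    have := hp.pderiv (i := k)
    have h0 : (pderiv k p).totalDegree = 0 := by
      have := this.totalDegree_le
      simpa using this
    exact totalDegree_eq_zero_iff_eq_C.mp h0
  unfold linF
  rw [one_smul] at h
  rw [← h]
  refine Finset.sum_congr rfl fun k _ => ?_
  rw [h, ← h2, mul_comm]

lemma linF_hom (c : Fin m → K) : (linF c).IsHomogeneous 1 := by
  refine IsHomogeneous.sum _ _ _ fun k _ => ?_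
  simpa using (isHomogeneous_C _ (c k)).mul (isHomogeneous_X K k)

lemma pderiv_linF (c : Fin m → K) (j : Fin m) : pderiv j (linF c) = C (c j) := by
  unfold linF
  rw [map_sum, Finset.sum_eq_single j]
  · simp
  · intro b _ hb
    simp [pderiv_X, hb]
  · simp

lemma lderiv_linF (a c : Fin m → K) : lderiv a (linF c) = C (eval a (linF c)) := by
  unfold lderiv
  simp only [pderiv_linF]
  simp [linF, smul_eq_C_mul, mul_comm]

lemma linF_comb (α β : K) (p q : Fin m → K) :
    linF (fun k => α * p k + β * q k) = C α * linF p + C β * linF q := by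
  simp only [linF, Finset.mul_sum, ← Finset.sum_add_distrib]
  refine Finset.sum_congr rfl fun k _ => ?_
  simp; ring

lemma linF_smul (α : K) (p : Fin m → K) :
    linF (fun k => α * p k) = C α * linF p := by
  simpa using linF_comb α 0 p p

lemma cc_linF (c : Fin m → K) : constantCoeff (linF c) = 0 := by
  simp [linF]

lemma linF_mem_pair {c p q : Fin m → K} (h : linF c ∈ Ideal.span {linF p, linF q}) :
    ∃ α β : K, linF c = C α * linF p + C β * linF q := by
  obtain ⟨f, g, h⟩ := Ideal.mem_span_pair.mp h
  refine ⟨constantCoeff f, constantCoeff g, ?_⟩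
  rw [← linF_comb]
  congr 1
  funext k
  have := congrArg (fun z => constantCoeff (pderiv k z)) h
  simp [Derivation.leibniz, pderiv_linF, cc_linF] at this
  exact this.symm

lemma linF_dvd {p q : Fin m → K} (h : linF p ∣ linF q) :
    ∃ α : K, linF q = C α * linF p := by
  have : linF q ∈ Ideal.span {linF p, linF p} := by
    simpa [Ideal.mem_span_singleton] using h
  obtain ⟨α, β, h⟩ := linF_mem_pair this
  exact ⟨α + β, by rw [h]; simp; ring⟩

lemma kill {c : Fin m → K} (hc : linF c ≠ 0) :
    ∃ φ : MvPolynomial (Fin m) K →ₐ[K] MvPolynomial (Fin m) K,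
      φ (linF c) = 0 ∧ (∀ f, linF c ∣ f - φ f) ∧ ∀ p, ∃ q, φ (linF p) = linF q := by
  have : ∃ k, c k ≠ 0 := by
    by_contra hh
    push Not at hh
    exact hc (by simp [linF, hh])
  obtain ⟨k, hk⟩ := this
  let g : Fin m → MvPolynomial (Fin m) K :=
    fun i => X i - C ((if i = k then 1 else 0) * (c k)⁻¹) * linF c
  have hlin : ∀ p, aeval g (linF p) = linF p - C (p k * (c k)⁻¹) * linF c := by
    intro p
    simp only [linF, map_sum, map_mul, aeval_C, aeval_X, algebraMap_eq]
    simp only [g, mul_sub, Finset.sum_sub_distrib]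
    congr 1
    rw [Finset.sum_eq_single k]
    · simp [linF, mul_assoc]
    · intro b _ hb
      simp [hb]
    · simp
  refine ⟨aeval g, ?_, ?_, ?_⟩
  · rw [hlin, mul_inv_cancel₀ hk]; simp
  · intro f
    induction f using MvPolynomial.induction_on with
    | C a => simp
    | add p q hp hq =>
      rw [map_add, add_sub_add_comm]; exact dvd_add hp hq
    | mul_X p i hp =>
      rw [map_mul, aeval_X]
      have : p * X i - aeval g p * g i = (p - aeval g p) * X i + aeval g p * (X i - g i) := by ring
      rw [this]
      refine dvd_add (hp.mul_right _) (Dvd.dvd.mul_left ?_ _)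
      simp [g]
  · intro p
    refine ⟨fun i => 1 * p i + -(p k * (c k)⁻¹) * c i, (hlin p).trans ?_⟩
    have := linF_comb 1 (-(p k * (c k)⁻¹)) p c
    rw [map_neg, map_one] at this
    rw [sub_eq_add_neg, ← neg_mul, ← one_mul (linF p)]
    exact this.symm

lemma linF_prime {c : Fin m → K} (hc : linF c ≠ 0) : Prime (linF c) := by
  obtain ⟨φ, h0, h1, -⟩ := kill hc
  have hk : ∀ f, linF c ∣ f ↔ φ f = 0 := by
    intro f
    constructor
    · rintro ⟨g, rfl⟩; simp [h0]
    · intro h; simpa [h] using h1 f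
  refine ⟨hc, ?_, ?_⟩
  · intro hu
    have := hu.map constantCoeff
    simp [cc_linF] at this
  · intro f g h
    rw [hk, map_mul, mul_eq_zero] at h
    simpa [hk] using h

lemma pair_prime {p q : Fin m → K} (hp : linF p ≠ 0) (hpq : ∀ α : K, linF q ≠ C α * linF p) :
    (Ideal.span {linF p, linF q}).IsPrime := by
  obtain ⟨φ, h0, h1, h2⟩ := kill hp
  obtain ⟨r, hr⟩ := h2 q
  have hr0 : linF r ≠ 0 := by
    intro h
    have := h1 (linF q)
    rw [hr, h, sub_zero] at this
    obtain ⟨α, h⟩ := linF_dvd this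
    exact hpq α h
  obtain ⟨ψ, h0', h1', -⟩ := kill hr0
  have : Ideal.span {linF p, linF q} = RingHom.ker (ψ.comp φ).toRingHom := by
    apply le_antisymm
    · rw [Ideal.span_le]
      rintro z (rfl | rfl)
      · simp [RingHom.mem_ker, h0]
      · simp [RingHom.mem_ker, hr, h0']
    · intro f hf
      have hf' : ψ (φ f) = 0 := hf
      obtain ⟨u, hu⟩ := h1 f
      obtain ⟨v, hv⟩ := h1' (φ f)
      obtain ⟨w, hw⟩ := h1 (linF q)
      rw [hf', sub_zero] at hv
      rw [hr] at hw
      rw [Ideal.mem_span_pair]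
      exact ⟨u - w * v, v, by linear_combination -hu - hv + v * hw⟩
  rw [this]
  exact RingHom.ker_isPrime _

lemma lderiv_mul (a : Fin m → K) (f g : MvPolynomial (Fin m) K) :
    lderiv a (f * g) = f * lderiv a g + g * lderiv a f := by
  simp only [lderiv, Derivation.leibniz, smul_eq_C_mul, smul_eq_mul, Finset.mul_sum,
    ← Finset.sum_add_distrib]
  exact Finset.sum_congr rfl fun k _ => by ring

/-- The spline description of the general residual. -/
lemma mem_res {e : ℕ} (a : Fin m → K) (c : Fin e → Fin m → K)
    (hprop : ∀ i j, i ≠ j → ∀ α : K, linF (c i) ≠ C α * linF (c j))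
    (ha : ∀ i, eval a (linF (c i)) ≠ 0) (s : MvPolynomial (Fin m) K) :
    s ∈ genResidual a (∏ i, linF (c i)) ↔
      ∀ j, ∃ u, ∀ i, linF (c i) ∣ C (eval a (linF (c i))) * u - C (c i j) * s := by
  have hne : ∀ i, linF (c i) ≠ 0 := fun i h => ha i (by rw [h]; simp)
  have hndvd : ∀ i k, i ≠ k → ¬ linF (c i) ∣ linF (c k) := by
    intro i k hik h
    obtain ⟨α, h⟩ := linF_dvd h
    exact hprop k i hik.symm α h
  have hdvd : ∀ g, (∏ i, linF (c i)) ∣ g ↔ ∀ i, linF (c i) ∣ g := by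
    intro g
    constructor
    · intro h i; exact (Finset.dvd_prod_of_mem (fun i => linF (c i)) (Finset.mem_univ i)).trans h
    · intro h
      apply Finset.prod_dvd_of_isRelPrime
      · intro i _ k _ hik
        exact (linF_prime (hne i)).irreducible.isRelPrime_iff_not_dvd.mpr (hndvd i k hik)
      · intro i _; exact h i
  have hstep : ∀ j, s * pderiv j (∏ i, linF (c i)) ∈
      Ideal.span {∏ i, linF (c i), lderiv a (∏ i, linF (c i))} ↔
      ∃ u, ∀ i, linF (c i) ∣ C (eval a (linF (c i))) * u - C (c i j) * s := by
    intro j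
    have hi : ∀ i u, (linF (c i) ∣ u * lderiv a (∏ i, linF (c i)) - s * pderiv j (∏ i, linF (c i)))
        ↔ linF (c i) ∣ C (eval a (linF (c i))) * u - C (c i j) * s := by
      intro i u
      rw [← Finset.mul_prod_erase Finset.univ _ (Finset.mem_univ i), lderiv_mul,
        Derivation.leibniz, lderiv_linF, pderiv_linF]
      set h := ∏ k ∈ Finset.univ.erase i, linF (c k) with hh
      have hnd : ¬ linF (c i) ∣ h := by
        intro hd
        obtain ⟨k, hk, hd⟩ := (linF_prime (hne i)).exists_mem_finset_dvd hd
        exact hndvd i k (Finset.ne_of_mem_erase hk).symm hd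
      have : u * (linF (c i) * lderiv a h + h * C (eval a (linF (c i)))) -
          s * (linF (c i) • pderiv j h + h • C (c i j)) =
          linF (c i) * (u * lderiv a h - s * pderiv j h) +
          h * (C (eval a (linF (c i))) * u - C (c i j) * s) := by
        simp only [smul_eq_mul]; ring
      rw [this, dvd_add_right (dvd_mul_right _ _)]
      constructor
      · intro hd; exact ((linF_prime (hne i)).dvd_or_dvd hd).resolve_left hnd
      · intro hd; exact hd.mul_left _
    rw [Ideal.mem_span_pair]
    constructor
    · rintro ⟨v, u, h⟩
      refine ⟨u, fun i => (hi i u).mp ((hdvd _).mp ⟨-v, ?_⟩ i)⟩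
      linear_combination h
    · rintro ⟨u, h⟩
      obtain ⟨v, hv⟩ := (hdvd _).mpr fun i => (hi i u).mpr (h i)
      exact ⟨-v, u, by linear_combination hv⟩
  rw [← forall_congr' hstep]
  unfold genResidual jacobianIdeal
  rw [Submodule.mem_colon]
  constructor
  · intro h j
    exact h _ (Ideal.subset_span ⟨j, rfl⟩)
  · intro h g hg
    refine Submodule.span_induction (p := fun g _ => s • g ∈ _) ?_ ?_ ?_ ?_ hg
    · rintro _ ⟨j, rfl⟩; exact h j
    · simp
    · intro x y _ _ hx hy; rw [smul_add]; exact add_mem hx hy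
    · intro r x _ hx; rw [smul_comm]; exact Submodule.smul_mem _ r hx

lemma isRegular_pair {x p : MvPolynomial (Fin m) K} (hx : Prime x) (hxp : ¬ x ∣ p)
    (hx0 : constantCoeff x = 0) (hp0 : constantCoeff p = 0) :
    RingTheory.Sequence.IsRegular (MvPolynomial (Fin m) K) [x, p] := by
  refine ⟨?_, ?_⟩
  · rw [RingTheory.Sequence.isWeaklyRegular_cons_iff,
      RingTheory.Sequence.isWeaklyRegular_singleton_iff]
    constructor
    · rw [isSMulRegular_iff_right_eq_zero_of_smul]
      intro z hz
      exact (mul_eq_zero.mp hz).resolve_left hx.ne_zero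
    · rw [isSMulRegular_iff_right_eq_zero_of_smul]
      intro z
      obtain ⟨z, rfl⟩ := Submodule.Quotient.mk_surjective _ z
      intro hz
      rw [← Submodule.Quotient.mk_smul, Submodule.Quotient.mk_eq_zero,
        Submodule.mem_smul_pointwise_iff_exists] at hz
      obtain ⟨y, -, hy⟩ := hz
      have : x ∣ p * z := ⟨y, hy.symm⟩
      obtain ⟨w, hw⟩ := (hx.dvd_or_dvd this).resolve_left hxp
      rw [Submodule.Quotient.mk_eq_zero, Submodule.mem_smul_pointwise_iff_exists]
      exact ⟨w, trivial, hw.symm⟩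
  · intro h
    have h1 : (1 : MvPolynomial (Fin m) K) ∈ Ideal.span {x, p} := by
      have : (1 : MvPolynomial (Fin m) K) ∈
          (⊤ : Submodule (MvPolynomial (Fin m) K) (MvPolynomial (Fin m) K)) := trivial
      rw [h] at this
      simpa [Ideal.ofList, Set.pair_comm, Set.insert_def] using this
    obtain ⟨u, v, h⟩ := Ideal.mem_span_pair.mp h1
    have := congrArg constantCoeff h
    simp [hx0, hp0] at this

lemma nonprop_symm {p q : Fin m → K} (hq : linF q ≠ 0) (h : ∀ t : K, linF p ≠ C t * linF q) :
    ∀ t : K, linF q ≠ C t * linF p := by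
  intro t ht
  have ht0 : t ≠ 0 := by
    rintro rfl
    exact hq (by simpa using ht)
  apply h t⁻¹
  rw [ht, ← mul_assoc, ← map_mul, inv_mul_cancel₀ ht0]
  simp

lemma span_swap {p q u v : Fin m → K} (h1 : linF p ∈ Ideal.span {linF u, linF v})
    (h2 : linF q ∈ Ideal.span {linF u, linF v}) (hp : linF p ≠ 0)
    (hpq : ∀ t : K, linF q ≠ C t * linF p) :
    linF u ∈ Ideal.span {linF p, linF q} ∧ linF v ∈ Ideal.span {linF p, linF q} := by
  obtain ⟨α, β, h1⟩ := linF_mem_pair h1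
  obtain ⟨γ, δ, h2⟩ := linF_mem_pair h2
  have hC : ∀ t : K, t ≠ 0 → (C t⁻¹ * C t : MvPolynomial (Fin m) K) = 1 := by
    intro t ht
    rw [← map_mul, inv_mul_cancel₀ ht, map_one]
  by_cases hdet : α * δ - β * γ = 0
  · exfalso
    have hd : (C α * C δ - C β * C γ : MvPolynomial (Fin m) K) = 0 := by
      rw [← map_mul, ← map_mul, ← map_sub, hdet, map_zero]
    by_cases hα : α = 0
    · have hβ : β ≠ 0 := by
        rintro rfl
        exact hp (by rw [h1, hα]; simp)
      apply hpq (β⁻¹ * δ)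
      rw [map_mul]
      linear_combination (-linF q) * hC β hβ + C β⁻¹ * C β * h2 - C β⁻¹ * C δ * h1 -
        C β⁻¹ * linF u * hd
    · apply hpq (α⁻¹ * γ)
      rw [map_mul]
      linear_combination (-linF q) * hC α hα + C α⁻¹ * C α * h2 - C α⁻¹ * C γ * h1 +
        C α⁻¹ * linF v * hd
  · have hd := hC _ hdet
    rw [map_sub (C : K →+* MvPolynomial (Fin m) K), map_mul, map_mul] at hd
    set e : MvPolynomial (Fin m) K := C (α * δ - β * γ)⁻¹
    constructor
    · rw [Ideal.mem_span_pair]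
      exact ⟨e * C δ, - e * C β, by linear_combination e * C δ * h1 - e * C β * h2 + linF u * hd⟩
    · rw [Ideal.mem_span_pair]
      exact ⟨-e * C γ, e * C α, by linear_combination e * C α * h2 - e * C γ * h1 + linF v * hd⟩

lemma q_key (a : Fin m → K) {w p q : Fin m → K} (h : linF w ∈ Ideal.span {linF p, linF q})
    (j : Fin m) :
    linF w ∣ C (eval a (linF w)) * (C (q j) * linF p - C (p j) * linF q) -
      C (w j) * (C (eval a (linF q)) * linF p - C (eval a (linF p)) * linF q) := by
  obtain ⟨α, β, h⟩ := linF_mem_pair h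
  have h1 : (C (w j) : MvPolynomial (Fin m) K) = C α * C (p j) + C β * C (q j) := by
    have := congrArg (pderiv j) h
    rw [← linF_comb, pderiv_linF, pderiv_linF] at this
    rw [this]; simp
  have h2 : (C (eval a (linF w)) : MvPolynomial (Fin m) K) =
      C α * C (eval a (linF p)) + C β * C (eval a (linF q)) := by
    rw [h]; simp
  refine ⟨C (eval a (linF p)) * C (q j) - C (eval a (linF q)) * C (p j), ?_⟩
  rw [h1, h2, h]; ring

lemma inter_pair {ι : Type*} [DecidableEq ι] (x g s : MvPolynomial (Fin m) K)
    (L : ι → MvPolynomial (Fin m) K) (F : Finset ι)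
    (hg : s ∈ Ideal.span {x, g})
    (hs : ∀ i ∈ F, s ∈ Ideal.span {x, L i})
    (hpr : ∀ i ∈ F, (Ideal.span {x, L i}).IsPrime)
    (hgn : ∀ i ∈ F, g ∉ Ideal.span {x, L i})
    (hLn : ∀ i ∈ F, ∀ k ∈ F, i ≠ k → L k ∉ Ideal.span {x, L i}) :
    s ∈ Ideal.span {x, g * ∏ i ∈ F, L i} := by
  induction F using Finset.induction_on with
  | empty => simpa using hg
  | insert i F hi ih =>
    have h1 := ih (fun k hk => hs k (Finset.mem_insert_of_mem hk))
      (fun k hk => hpr k (Finset.mem_insert_of_mem hk))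
      (fun k hk => hgn k (Finset.mem_insert_of_mem hk))
      (fun k hk l hl => hLn k (Finset.mem_insert_of_mem hk) l (Finset.mem_insert_of_mem hl))
    obtain ⟨u, v, h1⟩ := Ideal.mem_span_pair.mp h1
    have hii := Finset.mem_insert_self i F
    have hP := hpr i hii
    have hx : x ∈ Ideal.span {x, L i} := Ideal.subset_span (by simp)
    have h2 : v * (g * ∏ i ∈ F, L i) ∈ Ideal.span {x, L i} := by
      have : v * (g * ∏ i ∈ F, L i) = s - u * x := by rw [← h1]; ring
      rw [this]
      exact sub_mem (hs i hii) (Ideal.mul_mem_left _ _ hx)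
    have h3 : v ∈ Ideal.span {x, L i} := by
      refine (hP.mem_or_mem h2).resolve_right fun h => ?_
      rcases hP.mem_or_mem h with h | h
      · exact hgn i hii h
      · obtain ⟨k, hk, h⟩ := hP.prod_mem_iff.mp h
        refine hLn i hii k (Finset.mem_insert_of_mem hk) ?_ h
        rintro rfl
        exact hi hk
    obtain ⟨α, β, h3⟩ := Ideal.mem_span_pair.mp h3
    rw [Finset.prod_insert hi, Ideal.mem_span_pair]
    exact ⟨u + α * (g * ∏ i ∈ F, L i), β, by rw [← h1, ← h3]; ring⟩

lemma mem_res_cons {e : ℕ} (a : Fin m → K) (c : Fin e → Fin m → K) (y : Fin m → K)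
    (hprop : ∀ i j, i ≠ j → ∀ α : K, linF (c i) ≠ C α * linF (c j))
    (hy : ∀ i, ∀ α : K, linF y ≠ C α * linF (c i))
    (ha : ∀ i, eval a (linF (c i)) ≠ 0) (hya : eval a (linF y) ≠ 0)
    (s : MvPolynomial (Fin m) K) :
    s ∈ genResidual a (linF y * ∏ i, linF (c i)) ↔
      ∀ j, ∃ u, linF y ∣ C (eval a (linF y)) * u - C (y j) * s ∧
        ∀ i, linF (c i) ∣ C (eval a (linF (c i))) * u - C (c i j) * s := by
  have := mem_res a (Fin.cons y c : Fin (e + 1) → Fin m → K) ?_ ?_ s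
  · simpa [Fin.prod_univ_succ, Fin.forall_fin_succ] using this
  · intro i j
    refine Fin.cases ?_ (fun i => ?_) i <;> refine Fin.cases ?_ (fun j => ?_) j
    · simp
    · intro _; simpa using hy j
    · intro _
      have := nonprop_symm (fun h => ha i (by rw [h]; simp)) (hy i)
      simpa using this
    · intro hij
      simpa using hprop i j (fun h => hij (by rw [h]))
  · intro i
    refine Fin.cases ?_ (fun i => ?_) i
    · simpa using hya
    · simpa using ha i

/-- The basic double link, once `p` is known to lie in the residual of the extended arrangement
and to generate that residual modulo `x`. -/
lemma bdl {e : ℕ} (a : Fin m → K) (c : Fin e → Fin m → K) (y : Fin m → K)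
    (hprop : ∀ i j, i ≠ j → ∀ α : K, linF (c i) ≠ C α * linF (c j))
    (hy : ∀ i, ∀ α : K, linF y ≠ C α * linF (c i))
    (ha : ∀ i, eval a (linF (c i)) ≠ 0) (hya : eval a (linF y) ≠ 0)
    (p : MvPolynomial (Fin m) K)
    (hp : p ∈ genResidual a (linF y * ∏ i, linF (c i)))
    (hs : ∀ s ∈ genResidual a (linF y * ∏ i, linF (c i)), s ∈ Ideal.span {linF y, p}) :
    genResidual a (linF y * ∏ i, linF (c i)) =
      Ideal.span {linF y} * genResidual a (∏ i, linF (c i)) ⊔ Ideal.span {p} ∧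
    p ∈ genResidual a (∏ i, linF (c i)) := by
  have hyne : linF y ≠ 0 := fun h => hya (by rw [h]; simp)
  have hne : ∀ i, linF (c i) ≠ 0 := fun i h => ha i (by rw [h]; simp)
  refine ⟨le_antisymm ?_ ?_, ?_⟩
  · intro s hsr
    obtain ⟨z, w, hzw⟩ := Ideal.mem_span_pair.mp (hs s hsr)
    have hxz : linF y * z ∈ genResidual a (linF y * ∏ i, linF (c i)) := by
      have : linF y * z = s - w * p := by rw [← hzw]; ring
      rw [this]
      exact sub_mem hsr (Ideal.mul_mem_left _ _ hp)
    have hz : z ∈ genResidual a (∏ i, linF (c i)) := by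
      rw [mem_res a c hprop ha]
      rw [mem_res_cons a c y hprop hy ha hya] at hxz
      intro j
      obtain ⟨u', h0, h1⟩ := hxz j
      have h2 : linF y ∣ u' := by
        have h3 : linF y ∣ C (eval a (linF y)) * u' := by
          have := dvd_add h0 (show linF y ∣ C (y j) * (linF y * z) from ⟨C (y j) * z, by ring⟩)
          simpa using this
        have h4 : u' = C (eval a (linF y))⁻¹ * (C (eval a (linF y)) * u') := by
          rw [← mul_assoc, ← map_mul, inv_mul_cancel₀ hya]; simp
        rw [h4]
        exact h3.mul_left _
      obtain ⟨u, rfl⟩ := h2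
      refine ⟨u, fun i => ?_⟩
      have h5 : linF (c i) ∣ linF y * (C (eval a (linF (c i))) * u - C (c i j) * z) := by
        convert h1 i using 1
        ring
      refine ((linF_prime (hne i)).dvd_or_dvd h5).resolve_left fun h => ?_
      obtain ⟨α, h⟩ := linF_dvd h
      exact hy i α h
    rw [← hzw]
    refine add_mem (Ideal.mem_sup_left ?_) (Ideal.mem_sup_right ?_)
    · rw [mul_comm z (linF y)]
      exact Ideal.mul_mem_mul (Ideal.mem_span_singleton_self _) hz
    · exact Ideal.mul_mem_left _ _ (Ideal.mem_span_singleton_self _)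
  · refine sup_le ?_ ?_
    · rw [Ideal.span_singleton_mul_le_iff]
      intro z hz
      rw [mem_res a c hprop ha] at hz
      rw [mem_res_cons a c y hprop hy ha hya]
      intro j
      obtain ⟨u, hu⟩ := hz j
      refine ⟨linF y * u, ⟨C (eval a (linF y)) * u - C (y j) * z, by ring⟩, fun i => ?_⟩
      convert (hu i).mul_left (linF y) using 1
      ring
    · rw [Ideal.span_singleton_le_iff_mem]
      exact hp
  · rw [mem_res a c hprop ha]
    rw [mem_res_cons a c y hprop hy ha hya] at hp
    intro j
    obtain ⟨u, -, hu⟩ := hp j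
    exact ⟨u, hu⟩

lemma res_cons_mem_pair {e : ℕ} (a : Fin m → K) (c : Fin e → Fin m → K) (y : Fin m → K)
    (hprop : ∀ i j, i ≠ j → ∀ α : K, linF (c i) ≠ C α * linF (c j))
    (hy : ∀ i, ∀ α : K, linF y ≠ C α * linF (c i))
    (ha : ∀ i, eval a (linF (c i)) ≠ 0) (hya : eval a (linF y) ≠ 0)
    (s : MvPolynomial (Fin m) K)
    (hs : s ∈ genResidual a (linF y * ∏ i, linF (c i))) (i : Fin e) :
    s ∈ Ideal.span {linF y, linF (c i)} := by
  rw [mem_res_cons a c y hprop hy ha hya] at hs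
  set A := eval a (linF (c i)) with hA
  set B := eval a (linF y) with hB
  have hj : ∃ j, A * y j - B * c i j ≠ 0 := by
    by_contra hcon
    push Not at hcon
    apply hy i (A⁻¹ * B)
    rw [← linF_smul]
    congr 1
    funext k
    have h1 := hcon k
    have h2 : A ≠ 0 := ha i
    field_simp
    linear_combination h1
  obtain ⟨j, hj⟩ := hj
  obtain ⟨u, ⟨v, hv⟩, hu⟩ := hs j
  obtain ⟨w, hw⟩ := hu i
  have hC : (C (A * y j - B * c i j)⁻¹ * (C A * C (y j) - C B * C (c i j)) :
      MvPolynomial (Fin m) K) = 1 := by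
    rw [← map_mul, ← map_mul, ← map_sub, ← map_mul, inv_mul_cancel₀ hj, map_one]
  rw [Ideal.mem_span_pair]
  set D : MvPolynomial (Fin m) K := C (A * y j - B * c i j)⁻¹
  refine ⟨-(D * C A * v), D * C B * w, ?_⟩
  linear_combination D * C A * hv - D * C B * hw + s * hC

end helpers

open Classical in
/-- Let `K` have characteristic zero, let `A` be a set of `d ≥ 2`
distinct hyperplanes in `ℙⁿ` (given by pairwise non-proportional linear forms `L i`, with
`f_A = Π L i`), and let `H = V(x)` be a hyperplane not in `A` containing at most one
subspace of `S(A)` (`H` is almost generic).  Then, for a general linear form `ℓ`, the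
general residual of `A ∪ {H}` is a basic double link of `r_A`:
`r_{A∪{H}} = x·r_A + (p)`, where `x, p` is a regular sequence, `p ∈ r_A`,
`deg p = |A ∩ H|` (the number of distinct codimension-two subspaces `H' ∩ H`, `H' ∈ A`),
and `p` can be taken to be `f_A` when `H` contains no subspace of `S(A)`, and `ℓ_Q·h`
when `S(A) ∩ H = {Q}`, where `h` is the product of the linear divisors of `f_A` defining
hyperplanes not containing `Q` and `ℓ_Q` is a linear form defining the line spanned by
`Q` and the dual point `ℓ∨`. -/
theorem stmt_14 {K : Type*} [Field K] [CharZero K] {n d : ℕ} (hd : 2 ≤ d)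
    (L : Fin d → MvPolynomial (Fin (n + 1)) K)
    (hhom : ∀ i, (L i).IsHomogeneous 1) (hne : ∀ i, L i ≠ 0)
    (hprop : ∀ i j, i ≠ j → ∀ c : K, L i ≠ c • L j)
    (x : MvPolynomial (Fin (n + 1)) K) (hx : x.IsHomogeneous 1) (hx0 : x ≠ 0)
    (hxnotinA : ∀ i, ∀ c : K, x ≠ c • L i)
    (halmost : {P | P ∈ singSupp L ∧ x ∈ P}.Subsingleton) :
    ∃ p₀ : MvPolynomial (Fin (n + 1)) K, p₀ ≠ 0 ∧
      ∀ a : Fin (n + 1) → K, eval a p₀ ≠ 0 →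
        ∃ p : MvPolynomial (Fin (n + 1)) K,
          (genResidual a (x * ∏ i, L i) =
            Ideal.span {x} * genResidual a (∏ i, L i) ⊔ Ideal.span {p}) ∧
          p ∈ genResidual a (∏ i, L i) ∧
          RingTheory.Sequence.IsRegular (MvPolynomial (Fin (n + 1)) K) [x, p] ∧
          p.totalDegree =
            Set.ncard {I : Ideal (MvPolynomial (Fin (n + 1)) K) |
              ∃ i, I = Ideal.span {L i, x}} ∧
          ((∀ P ∈ singSupp L, x ∉ P) → p = ∏ i, L i) ∧
          (∀ Q ∈ singSupp L, x ∈ Q →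
            ∃ lQ : MvPolynomial (Fin (n + 1)) K, lQ.IsHomogeneous 1 ∧ lQ ≠ 0 ∧
              lQ ∈ Q ∧ eval a lQ = 0 ∧
              p = lQ * ∏ i ∈ Finset.univ.filter (fun i => L i ∉ Q), L i) := by
  choose c hc using fun i => exists_linF (hhom i)
  obtain ⟨y, rfl⟩ := exists_linF hx
  obtain rfl : L = fun i => linF (c i) := funext hc
  clear hc hhom hx
  simp only [smul_eq_C_mul] at hprop hxnotinA
  have hxn : ∀ i, ∀ t : K, linF (c i) ≠ C t * linF y :=
    fun i => nonprop_symm (hne i) (hxnotinA i)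
  have hprime : ∀ i, (Ideal.span {linF y, linF (c i)}).IsPrime :=
    fun i => pair_prime hx0 (hxn i)
  have hyprime := linF_prime hx0
  have hyLn : ∀ i, ¬ linF y ∣ linF (c i) := by
    intro i h
    obtain ⟨t, h⟩ := linF_dvd h
    exact hxn i t h
  -- two hyperplanes meeting `H` in the same subspace
  have hsame : ∀ i k, i ≠ k → linF (c k) ∈ Ideal.span {linF y, linF (c i)} →
      linF y ∈ Ideal.span {linF (c i), linF (c k)} := by
    intro i k hik h
    exact (span_swap (Ideal.subset_span (by simp)) h (hne i) (hprop k i hik.symm)).1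
  refine ⟨linF y * ∏ i, linF (c i),
    mul_ne_zero hx0 (Finset.prod_ne_zero_iff.mpr fun i _ => hne i), ?_⟩
  intro a ha0
  rw [map_mul, map_prod, mul_ne_zero_iff, Finset.prod_ne_zero_iff] at ha0
  have hya := ha0.1
  have ha : ∀ i, eval a (linF (c i)) ≠ 0 := fun i => ha0.2 i (Finset.mem_univ i)
  clear ha0
  by_cases hQ : ∃ Q ∈ singSupp (fun i => linF (c i)), linF y ∈ Q
  · obtain ⟨Q, hQS, hyQ⟩ := hQ
    have hQuniq : ∀ P ∈ singSupp (fun i => linF (c i)), linF y ∈ P → P = Q :=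
      fun P hP hyP => halmost ⟨hP, hyP⟩ ⟨hQS, hyQ⟩
    have hQS' := hQS
    obtain ⟨i₀, j₀, hij, hQeq⟩ := hQS'
    set F := Finset.univ.filter (fun i => linF (c i) ∉ Q) with hF
    have hFmem : ∀ i, i ∈ F ↔ linF (c i) ∉ Q := by simp [hF]
    have hi₀ : linF (c i₀) ∈ Q := by rw [hQeq]; exact Ideal.subset_span (by simp)
    have hj₀ : linF (c j₀) ∈ Q := by rw [hQeq]; exact Ideal.subset_span (by simp)
    set A := eval a (linF (c i₀)) with hA
    set B := eval a (linF (c j₀)) with hB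
    obtain ⟨v, hv⟩ : ∃ v : Fin (n + 1) → K,
        linF v = C B * linF (c i₀) - C A * linF (c j₀) :=
      ⟨fun k => B * c i₀ k + (-A) * c j₀ k, by rw [linF_comb, map_neg]; ring⟩
    have hv0 : linF v ≠ 0 := by
      intro h
      rw [h] at hv
      apply hprop i₀ j₀ hij (B⁻¹ * A)
      have hC : (C B⁻¹ * C B : MvPolynomial (Fin (n + 1)) K) = 1 := by
        rw [← map_mul, inv_mul_cancel₀ (ha j₀), map_one]
      rw [map_mul]
      linear_combination (-linF (c i₀)) * hC - C B⁻¹ * hv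
    have hvQ : linF v ∈ Q := by
      rw [hv]
      exact sub_mem (Ideal.mul_mem_left _ _ hi₀) (Ideal.mul_mem_left _ _ hj₀)
    have hva : eval a (linF v) = 0 := by
      rw [hv]
      simp only [map_sub, map_mul, eval_C, ← hA, ← hB]
      ring
    have hvy : ∀ t : K, linF v ≠ C t * linF y := by
      intro t ht
      have := congrArg (eval a) ht
      rw [hva, map_mul, eval_C] at this
      have ht0 : t = 0 := (mul_eq_zero.mp this.symm).resolve_right hya
      exact hv0 (by rw [ht, ht0]; simp)
    have hyvQ : Ideal.span {linF y, linF v} ≤ Q := by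
      rw [Ideal.span_le]
      rintro z (rfl | rfl)
      · exact hyQ
      · exact hvQ
    -- distinct intersections off `Q`
    have hLn : ∀ i ∈ F, ∀ k, i ≠ k → linF (c k) ∉ Ideal.span {linF y, linF (c i)} := by
      intro i hi k hik h
      have h1 := hsame i k hik h
      have h2 := hQuniq _ ⟨i, k, hik, rfl⟩ h1
      apply (hFmem i).mp hi
      rw [← h2]
      exact Ideal.subset_span (by simp)
    have hp0 : linF v * ∏ i ∈ F, linF (c i) ≠ 0 :=
      mul_ne_zero hv0 (Finset.prod_ne_zero_iff.mpr fun i _ => hne i)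
    have hpR : linF v * ∏ i ∈ F, linF (c i) ∈ genResidual a (linF y * ∏ i, linF (c i)) := by
      rw [mem_res_cons a c y hprop hxnotinA ha hya]
      intro j
      have key : ∀ w : Fin (n + 1) → K, linF w ∈ Q → linF w ∣
          C (eval a (linF w)) * ((∏ i ∈ F, linF (c i)) *
            (C (c j₀ j) * linF (c i₀) - C (c i₀ j) * linF (c j₀))) -
          C (w j) * (linF v * ∏ i ∈ F, linF (c i)) := by
        intro w hw
        rw [hQeq] at hw
        convert (q_key a hw j).mul_left (∏ i ∈ F, linF (c i)) using 1
        rw [hv]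
        ring
      refine ⟨(∏ i ∈ F, linF (c i)) *
        (C (c j₀ j) * linF (c i₀) - C (c i₀ j) * linF (c j₀)), key y hyQ, fun i => ?_⟩
      by_cases hi : linF (c i) ∈ Q
      · exact key _ hi
      · have hd : linF (c i) ∣ ∏ i ∈ F, linF (c i) :=
          Finset.dvd_prod_of_mem (fun i => linF (c i)) ((hFmem i).mpr hi)
        exact dvd_sub ((hd.mul_right _).mul_left _) ((hd.mul_left _).mul_left _)
    have hpS : ∀ s ∈ genResidual a (linF y * ∏ i, linF (c i)),
        s ∈ Ideal.span {linF y, linF v * ∏ i ∈ F, linF (c i)} := by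
      intro s hs
      have hsi := res_cons_mem_pair a c y hprop hxnotinA ha hya s hs
      refine inter_pair _ _ _ (fun i => linF (c i)) F ?_ (fun i _ => hsi i)
        (fun i _ => hprime i) ?_ (fun i hi k _ hik => hLn i hi k hik)
      · have h1 : linF (c i₀) ∈ Ideal.span {linF y, linF v} :=
          (span_swap (hQeq ▸ hyQ) (hQeq ▸ hvQ) hx0 hvy).1
        refine Ideal.span_le.mpr ?_ (hsi i₀)
        rintro z (rfl | rfl)
        · exact Ideal.subset_span (by simp)
        · exact h1
      · intro i hi h
        have h1 := (span_swap (Ideal.subset_span (by simp)) h hx0 hvy).2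
        exact (hFmem i).mp hi (hyvQ h1)
    obtain ⟨hR, hmem⟩ := bdl a c y hprop hxnotinA ha hya _ hpR hpS
    refine ⟨linF v * ∏ i ∈ F, linF (c i), hR, hmem, ?_, ?_, ?_, ?_⟩
    · refine isRegular_pair hyprime ?_ (cc_linF y) (by rw [map_mul, cc_linF, zero_mul])
      intro h
      rcases hyprime.dvd_or_dvd h with h | h
      · obtain ⟨t, h⟩ := linF_dvd h
        exact hvy t h
      · obtain ⟨k, -, h⟩ := hyprime.exists_mem_finset_dvd h
        exact hyLn k h
    · have hdeg : (linF v * ∏ i ∈ F, linF (c i)).IsHomogeneous (1 + ∑ i ∈ F, 1) :=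
        (linF_hom v).mul (IsHomogeneous.prod F _ _ fun i _ => linF_hom (c i))
      rw [hdeg.totalDegree hp0]
      have hset : {I : Ideal (MvPolynomial (Fin (n + 1)) K) |
          ∃ i, I = Ideal.span {linF (c i), linF y}} =
          insert Q ((fun i => Ideal.span {linF (c i), linF y}) '' (F : Set (Fin d))) := by
        have hinQ : ∀ i, linF (c i) ∈ Q → Ideal.span {linF (c i), linF y} = Q := by
          intro i hi
          apply le_antisymm
          · rw [Ideal.span_le]
            rintro z (rfl | rfl)
            · exact hi
            · exact hyQ
          · have := span_swap (hQeq ▸ hi) (hQeq ▸ hyQ) (hne i) (hxnotinA i)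
            conv_lhs => rw [hQeq]
            rw [Ideal.span_le]
            rintro z (rfl | rfl)
            · exact this.1
            · exact this.2
        ext I
        constructor
        · rintro ⟨i, rfl⟩
          by_cases hi : linF (c i) ∈ Q
          · exact Or.inl (hinQ i hi)
          · exact Or.inr ⟨i, (hFmem i).mpr hi, rfl⟩
        · rintro (rfl | ⟨i, -, rfl⟩)
          · exact ⟨i₀, (hinQ i₀ hi₀).symm⟩
          · exact ⟨i, rfl⟩
      rw [hset, Set.ncard_insert_of_notMem, Set.ncard_image_of_injOn, Set.ncard_coe_finset]
      · simp [add_comm]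
      · intro i hi k hk h
        by_contra hik
        apply hLn i hi k hik
        rw [Set.pair_comm]
        have h' : Ideal.span {linF (c i), linF y} = Ideal.span {linF (c k), linF y} := h
        rw [h']
        exact Ideal.subset_span (by simp)
      · rintro ⟨i, hi, h⟩
        apply (hFmem i).mp hi
        rw [← h]
        exact Ideal.subset_span (by simp)
    · intro h
      exact absurd hyQ (h Q hQS)
    · intro Q' hQ' hyQ'
      obtain rfl := hQuniq Q' hQ' hyQ'
      exact ⟨linF v, linF_hom v, hv0, hvQ, hva, rfl⟩
  · push Not at hQ
    have hLn : ∀ i k, i ≠ k → linF (c k) ∉ Ideal.span {linF y, linF (c i)} :=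
      fun i k hik h => hQ _ ⟨i, k, hik, rfl⟩ (hsame i k hik h)
    have hp0 : ∏ i, linF (c i) ≠ 0 := Finset.prod_ne_zero_iff.mpr fun i _ => hne i
    have hpR : ∏ i, linF (c i) ∈ genResidual a (linF y * ∏ i, linF (c i)) := by
      rw [mem_res_cons a c y hprop hxnotinA ha hya]
      intro j
      refine ⟨C ((eval a (linF y))⁻¹ * y j) * ∏ i, linF (c i), ⟨0, ?_⟩, fun i => ?_⟩
      · rw [← mul_assoc, ← map_mul, mul_inv_cancel_left₀ hya]
        ring
      · have hd : linF (c i) ∣ ∏ i, linF (c i) :=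
          Finset.dvd_prod_of_mem (fun i => linF (c i)) (Finset.mem_univ i)
        exact dvd_sub ((hd.mul_left _).mul_left _) (hd.mul_left _)
    have hpS : ∀ s ∈ genResidual a (linF y * ∏ i, linF (c i)),
        s ∈ Ideal.span {linF y, ∏ i, linF (c i)} := by
      intro s hs
      have hsi := res_cons_mem_pair a c y hprop hxnotinA ha hya s hs
      have := inter_pair (linF y) 1 s (fun i => linF (c i)) Finset.univ ?_ (fun i _ => hsi i)
        (fun i _ => hprime i) ?_ (fun i _ k _ hik => hLn i k hik)
      · rwa [one_mul] at this
      · exact Ideal.mem_span_pair.mpr ⟨0, s, by ring⟩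
      · intro i _ h
        exact (hprime i).ne_top ((Ideal.eq_top_iff_one _).mpr h)
    obtain ⟨hR, hmem⟩ := bdl a c y hprop hxnotinA ha hya _ hpR hpS
    refine ⟨∏ i, linF (c i), hR, hmem, ?_, ?_, fun _ => rfl, ?_⟩
    · refine isRegular_pair hyprime ?_ (cc_linF y) ?_
      · intro h
        obtain ⟨k, -, h⟩ := hyprime.exists_mem_finset_dvd h
        exact hyLn k h
      · rw [map_prod]
        exact Finset.prod_eq_zero (Finset.mem_univ (⟨0, by omega⟩ : Fin d)) (cc_linF _)
    · have hdeg : (∏ i, linF (c i)).IsHomogeneous (∑ _i : Fin d, 1) :=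
        IsHomogeneous.prod Finset.univ _ _ fun i _ => linF_hom (c i)
      rw [hdeg.totalDegree hp0]
      have hset : {I : Ideal (MvPolynomial (Fin (n + 1)) K) |
          ∃ i, I = Ideal.span {linF (c i), linF y}} =
          (fun i => Ideal.span {linF (c i), linF y}) '' (Set.univ : Set (Fin d)) := by
        ext I
        simp [eq_comm]
      rw [hset, Set.ncard_image_of_injective, Set.ncard_univ]
      · simp
      · intro i k h
        by_contra hik
        apply hLn i k hik
        rw [Set.pair_comm]
        have h' : Ideal.span {linF (c i), linF y} = Ideal.span {linF (c k), linF y} := h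
        rw [h']
        exact Ideal.subset_span (by simp)
    · intro Q hQS hyQ
      exact absurd hyQ (hQ Q hQS)
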